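/- Let C ⊆ ℝ^m be a convex set with nonempty interior and vertex 0 (i.e., 0 ∈ C and C is star-shaped cone-generating), and let F : C → ℝ^n be Lipschitz with F(0) = 0 and Gâteaux differentiable at 0 along admissible directions of C with derivative dF(0). If dF(0) maps the convex cone generated by C onto all of ℝ^n, then for every neighborhood V of 0 in ℝ^m, the point 0 lies in the interior of F(V ∩ C). -/

import Mathlib

open Filter
open scoped NNReal

/-!
If `g` is Lipschitz and vanishes outside a bounded set `B`, then `t ↦ ∫_B det (1 + t Dg)` is a
polynomial. For small `t` the map `id + t g` is a Lipschitz bijection of `B`, so by the change of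
variables formula the polynomial is constant, equal to the volume of `B`, and so is its value at
`1`. For a Lipschitz retraction `id + g` of a ball to its sphere the determinant would vanish almost
everywhere: there is no such retraction, and Brouwer's theorem for Lipschitz maps follows.

Lift the vectors `± b i` of a basis of the target to the cone over `C`. Weighting these lifts by the
positive and negative parts of the coordinates gives a Lipschitz, positively homogeneous right
inverse `A` of the Gâteaux derivative, mapping a neighborhood of `0` into `C`. The one-sided
directional derivatives of `F ∘ A` at `0` are given by the identity; being Lipschitz in finite
dimension, `F ∘ A` is then Fréchet differentiable at `0`, and Brouwer's theorem makes it open there.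
-/

open MeasureTheory Metric Set Topology Polynomial

theorem exists_natDegree_le_finrank_and_eval_eq_det_one_add_smul {K V : Type*} [Field K]
    [AddCommGroup V] [Module K V] [FiniteDimensional K V] (A : Module.End K V) :
    ∃ p : K[X], p.natDegree ≤ Module.finrank K V ∧ ∀ t, p.eval t = LinearMap.det (1 + t • A) := by
  let b := Module.finBasis K V
  let M := LinearMap.toMatrix b b A
  refine ⟨((X : K[X]) • M.map C + (1 : Matrix _ _ K).map C).det, ?_, fun t => ?_⟩
  · simpa using natDegree_det_X_add_C_le M 1
  · have hmatrix : LinearMap.toMatrix b b (1 + t • A) = t • M + 1 := by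
      rw [map_add, map_smul, LinearMap.toMatrix_one, add_comm]
    rw [← LinearMap.det_toMatrix b, hmatrix, ← coe_evalRingHom, RingHom.map_det]
    congr 1
    ext i j
    simp [Matrix.one_apply, apply_ite, mul_comm t]

theorem det_one_add_eq_sum_lagrangeBasis {K V : Type*} [Field K] [DecidableEq K]
    [AddCommGroup V] [Module K V] [FiniteDimensional K V] {s : Finset K}
    (hs : Module.finrank K V < s.card) (A : Module.End K V) :
    LinearMap.det (1 + A) =
      ∑ t ∈ s, (Lagrange.basis s id t).eval 1 * LinearMap.det (1 + t • A) := by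
  obtain ⟨p, hdeg, hp⟩ := exists_natDegree_le_finrank_and_eval_eq_det_one_add_smul A
  have hps : p.degree < s.card :=
    degree_le_natDegree.trans_lt (mod_cast hdeg.trans_lt hs)
  have heval := congrArg (eval 1)
    (Lagrange.eq_interpolate (v := id) Function.injective_id.injOn hps)
  simpa [Lagrange.interpolate_apply, eval_finsetSum, hp, mul_comm] using heval

section Volume

variable {E : Type*} [NormedAddCommGroup E] [NormedSpace ℝ E] [FiniteDimensional ℝ E]

theorem det_one_add_pos_of_norm_lt_one {A : E →L[ℝ] E} (hA : ‖A‖ < 1) : 0 < (1 + A).det := by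
  have hne : ∀ t ∈ Icc (0 : ℝ) 1, (1 + t • A).det ≠ 0 := by
    intro t ht
    have hlt : ‖-(t • A)‖ < 1 := by
      rw [norm_neg, norm_smul, Real.norm_of_nonneg ht.1]
      exact (mul_le_of_le_one_left (norm_nonneg A) ht.2).trans_lt hA
    have hunit := (isUnit_one_sub_of_norm_lt_one hlt).map
      (ContinuousLinearMap.toLinearMapRingHom : (E →L[ℝ] E) →+* (E →ₗ[ℝ] E))
    rw [sub_neg_eq_add] at hunit
    exact (hunit.map LinearMap.det).ne_zero
  have hcont : Continuous fun t : ℝ => (1 + t • A).det :=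
    ContinuousLinearMap.continuous_det.comp (by fun_prop)
  by_contra! hneg
  obtain ⟨t, ht, h0⟩ := intermediate_value_Icc' zero_le_one hcont.continuousOn
    (show (0 : ℝ) ∈ _ from ⟨by simpa using hneg, by simp [ContinuousLinearMap.det]⟩)
  exact hne t ht h0

theorem bijective_id_add_of_lipschitzWith_lt_one {X : Type*} [NormedAddCommGroup X]
    [CompleteSpace X] {L : ℝ≥0} {g : X → X} (hg : LipschitzWith L g) (hL : L < 1) :
    Function.Bijective fun x => x + g x := by
  have hanti : AntilipschitzWith 1 (id : X → X) := AntilipschitzWith.id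
  refine ⟨(hanti.add_lipschitzWith hg (by simpa using hL)).injective, fun y => ?_⟩
  have hcontr : ContractingWith L fun x => y - g x :=
    ⟨hL, by simpa using (LipschitzWith.const y).sub hg⟩
  exact ⟨hcontr.fixedPoint, eq_sub_iff_add_eq.1 hcontr.fixedPoint_isFixedPt.symm⟩

variable [MeasurableSpace E] [BorelSpace E] (μ : Measure E) [μ.IsAddHaarMeasure]

theorem addHaar_image_eq_zero_of_lipschitzOnWith {K : ℝ≥0} {f : E → E} {s : Set E}
    (hf : LipschitzOnWith K f s) (hs : μ s = 0) : μ (f '' s) = 0 := by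
  let ν : Measure E := Measure.hausdorffMeasure (Module.finrank ℝ E)
  have hνs : ν s = 0 := Measure.absolutelyContinuous_isAddHaarMeasure ν μ hs
  refine Measure.absolutelyContinuous_isAddHaarMeasure μ ν (le_antisymm ?_ zero_le)
  simpa [ν, hνs] using hf.hausdorffMeasure_image_le (Nat.cast_nonneg (Module.finrank ℝ E))

theorem setIntegral_det_one_add_fderiv_of_lipschitzWith_lt_one {L : ℝ≥0} {g : E → E}
    (hg : LipschitzWith L g) (hL : L < 1) {B : Set E} (hB : MeasurableSet B)
    (hgB : ∀ x ∉ B, g x = 0) : ∫ x in B, (1 + fderiv ℝ g x).det ∂μ = μ.real B := by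
  set f : E → E := fun x => x + g x with hf
  have hbij : Function.Bijective f := bijective_id_add_of_lipschitzWith_lt_one hg hL
  have himage : f '' B = B := by
    have hcompl : f '' Bᶜ = Bᶜ := by
      simpa using image_congr (s := Bᶜ) (f := f) (g := id) fun x hx => by simp [hf, hgB x hx]
    rwa [image_compl_eq hbij, compl_inj_iff] at hcompl
  let D := {x | DifferentiableAt ℝ g x}
  have hDnull : μ Dᶜ = 0 := hg.ae_differentiableAt
  have hBD : (B ∩ D : Set E) =ᵐ[μ] B := inter_ae_eq_left_of_ae_eq_univ (ae_eq_univ.2 hDnull)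
  have hfBD : f '' (B ∩ D) =ᵐ[μ] B := by
    have hnull : μ (f '' (B \ D)) = 0 :=
      addHaar_image_eq_zero_of_lipschitzOnWith μ (LipschitzWith.id.add hg).lipschitzOnWith
        (measure_mono_null (sdiff_subset_compl B D) hDnull)
    have hunion := union_ae_eq_left_of_ae_eq_empty (s := f '' (B ∩ D)) (ae_eq_empty.2 hnull)
    rw [← image_union, inter_union_sdiff, himage] at hunion
    exact hunion.symm
  have hderiv : ∀ x ∈ B ∩ D, HasFDerivWithinAt f (1 + fderiv ℝ g x) (B ∩ D) x := fun x hx =>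
    ((hasFDerivAt_id x).add hx.2.hasFDerivAt).hasFDerivWithinAt
  have hpos (x : E) : 0 < (1 + fderiv ℝ g x).det :=
    det_one_add_pos_of_norm_lt_one ((norm_fderiv_le_of_lipschitz ℝ hg).trans_lt (mod_cast hL))
  calc
    ∫ x in B, (1 + fderiv ℝ g x).det ∂μ = ∫ x in B ∩ D, |(1 + fderiv ℝ g x).det| • (1 : ℝ) ∂μ := by
      simp only [abs_of_pos (hpos _), smul_eq_mul, mul_one, setIntegral_congr_set hBD]
    _ = ∫ _ in f '' (B ∩ D), (1 : ℝ) ∂μ :=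
      (integral_image_eq_integral_abs_det_fderiv_smul μ
        (hB.inter (measurableSet_of_differentiableAt ℝ g)) hderiv hbij.injective.injOn
        fun _ => 1).symm
    _ = μ.real B := by simp [setIntegral_congr_set hfBD]

theorem setIntegral_det_one_add_fderiv {L : ℝ≥0} {g : E → E} (hg : LipschitzWith L g) {B : Set E}
    (hB : MeasurableSet B) (hμB : μ B ≠ ⊤) (hgB : ∀ x ∉ B, g x = 0) :
    ∫ x in B, (1 + fderiv ℝ g x).det ∂μ = μ.real B := by
  rcases eq_or_ne (μ.real B) 0 with hzero | hne
  · rw [hzero, setIntegral_measure_zero _ ((measureReal_eq_zero_iff hμB).1 hzero)]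
  obtain ⟨s, hs, hcard⟩ := (Ioo_infinite (inv_pos.2 (by positivity : (0 : ℝ) < L + 1)))
    |>.exists_subset_card_eq (Module.finrank ℝ E + 1)
  have hsmall : ∀ t ∈ s, ∫ x in B, (1 + t • fderiv ℝ g x).det ∂μ = μ.real B := by
    intro t ht
    obtain ⟨ht0, htL⟩ := hs ht
    have hlt : ‖t‖₊ * L < 1 := by
      rw [← NNReal.coe_lt_coe, NNReal.coe_mul, coe_nnnorm, Real.norm_of_nonneg ht0.le]
      rw [lt_inv_comm₀ ht0 (by positivity), ← one_div, lt_div_iff₀ ht0] at htL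
      push_cast
      linarith
    simpa only [Function.comp_def, ← Pi.smul_def, fderiv_const_smul_field, Pi.smul_apply] using
      setIntegral_det_one_add_fderiv_of_lipschitzWith_lt_one μ ((lipschitzWith_smul t).comp hg) hlt
        hB fun x hx => by simp [hgB x hx]
  -- Integrability comes for free: the integral of a nonintegrable function would be zero.
  have hint : ∀ t ∈ s, IntegrableOn (fun x => (1 + t • fderiv ℝ g x).det) B μ := fun t ht =>
    not_imp_comm.1 integral_undef (hsmall t ht ▸ hne)
  have hinterp (x : E) : (1 + fderiv ℝ g x).det =
      ∑ t ∈ s, (Lagrange.basis s id t).eval 1 * (1 + t • fderiv ℝ g x).det :=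
    det_one_add_eq_sum_lagrangeBasis (by omega) (fderiv ℝ g x : E →ₗ[ℝ] E)
  calc
    ∫ x in B, (1 + fderiv ℝ g x).det ∂μ
      = ∑ t ∈ s, (Lagrange.basis s id t).eval 1 * ∫ x in B, (1 + t • fderiv ℝ g x).det ∂μ := by
        simp_rw [hinterp, integral_finsetSum s fun t ht => (hint t ht).const_mul _,
          integral_const_mul]
    _ = (∑ t ∈ s, Lagrange.basis s id t).eval 1 * μ.real B := by
        rw [eval_finsetSum, Finset.sum_mul]
        exact Finset.sum_congr rfl fun t ht => by rw [hsmall t ht]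
    _ = μ.real B := by
        rw [Lagrange.sum_basis Function.injective_id.injOn (Finset.card_pos.1 (by omega)), eval_one,
          one_mul]

end Volume

section Brouwer

variable {E : Type*} [NormedAddCommGroup E] [NormedSpace ℝ E]

/-- The radial retraction of a normed space onto the closed ball of radius `r` about the origin. -/
noncomputable def radialRetraction (r : ℝ) (x : E) : E := (r / max r ‖x‖) • x

theorem radialRetraction_of_norm_le {r : ℝ} (hr : 0 < r) {x : E} (hx : ‖x‖ ≤ r) :
    radialRetraction r x = x := by
  rw [radialRetraction, max_eq_left hx, div_self hr.ne', one_smul]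

theorem radialRetraction_of_le_norm {r : ℝ} {x : E} (hx : r ≤ ‖x‖) :
    radialRetraction r x = (r / ‖x‖) • x := by
  rw [radialRetraction, max_eq_right hx]

theorem norm_radialRetraction {r : ℝ} (hr : 0 < r) (x : E) :
    ‖radialRetraction r x‖ = min r ‖x‖ := by
  rcases le_total ‖x‖ r with hx | hx
  · rw [radialRetraction_of_norm_le hr hx, min_eq_right hx]
  · rw [radialRetraction_of_le_norm hx, norm_smul, norm_div, norm_norm, Real.norm_of_nonneg hr.le,
      div_mul_cancel₀ _ (hr.trans_le hx).ne', min_eq_left hx]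

theorem radialRetraction_mem_closedBall {r : ℝ} (hr : 0 < r) (x : E) :
    radialRetraction r x ∈ closedBall 0 r :=
  mem_closedBall_zero_iff.2 ((norm_radialRetraction hr x).trans_le (min_le_left _ _))

theorem lipschitzWith_radialRetraction {r : ℝ} (hr : 0 < r) :
    LipschitzWith 2 (radialRetraction r : E → E) := by
  refine LipschitzWith.of_dist_le_mul fun x y => ?_
  have hx : 0 < max r ‖x‖ := lt_max_of_lt_left hr
  have : 0 < max r ‖y‖ := lt_max_of_lt_left hr
  have hsplit : radialRetraction r x - radialRetraction r y = (r / max r ‖x‖) • (x - y) +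
      ((max r ‖y‖ - max r ‖x‖) / max r ‖x‖) • radialRetraction r y := by
    simp only [radialRetraction]
    match_scalars <;> field
  have hmax : |max r ‖y‖ - max r ‖x‖| ≤ ‖x - y‖ := by
    rw [max_comm r, max_comm r, norm_sub_rev]
    exact (abs_max_sub_max_le_abs _ _ _).trans (abs_norm_sub_norm_le y x)
  rw [dist_eq_norm, dist_eq_norm, hsplit]
  calc
    _ ≤ r / max r ‖x‖ * ‖x - y‖ + |max r ‖y‖ - max r ‖x‖| / max r ‖x‖ * ‖radialRetraction r y‖ := by
      refine (norm_add_le _ _).trans_eq ?_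
      simp only [norm_smul, Real.norm_eq_abs, abs_div, abs_of_pos hr, abs_of_pos hx]
    _ ≤ r / max r ‖x‖ * ‖x - y‖ + ‖x - y‖ / max r ‖x‖ * r := by
      gcongr
      exact (norm_radialRetraction hr y).trans_le (min_le_left _ _)
    _ = r / max r ‖x‖ * (2 * ‖x - y‖) := by ring
    _ ≤ (2 : ℝ≥0) * ‖x - y‖ :=
      mul_le_of_le_one_left (by positivity) ((div_le_one hx).2 (le_max_left _ _))

theorem not_surjective_of_isLocalMax_norm {F : Type*} [NormedAddCommGroup F] [NormedSpace ℝ F]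
    {f : E → F} {f' : E →L[ℝ] F} {x : E} (hf : HasFDerivAt f f' x)
    (hmax : IsLocalMax (fun y => ‖f y‖) x) (hx : f x ≠ 0) : ¬Function.Surjective f' := by
  obtain ⟨φ, hφ, hφx⟩ := exists_dual_vector ℝ (f x) (norm_ne_zero_iff.2 hx)
  have hφmax : IsLocalMax (fun y => φ (f y)) x := by
    filter_upwards [hmax] with y hy
    calc
      φ (f y) ≤ ‖φ‖ * ‖f y‖ := (le_abs_self _).trans (φ.le_opNorm _)
      _ ≤ φ (f x) := by simpa [hφ, hφx] using hy
  have hzero : φ.comp f' = 0 := hφmax.hasFDerivAt_eq_zero (φ.hasFDerivAt.comp x hf)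
  intro hsurj
  obtain ⟨v, hv⟩ := hsurj (f x)
  have hφv : φ (f' v) = 0 := DFunLike.congr_fun hzero v
  rw [hv, hφx] at hφv
  exact hx (norm_eq_zero.1 (mod_cast hφv))

variable [FiniteDimensional ℝ E]

theorem det_eq_zero_of_isLocalMax_norm {f : E → E} {f' : E →L[ℝ] E} {x : E}
    (hf : HasFDerivAt f f' x) (hmax : IsLocalMax (fun y => ‖f y‖) x) (hx : f x ≠ 0) :
    f'.det = 0 := by
  by_contra hdet
  exact not_surjective_of_isLocalMax_norm hf hmax hx
    (LinearMap.equivOfDetNeZero (f' : E →ₗ[ℝ] E) hdet).surjective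

theorem not_mapsTo_sphere_of_lipschitzOnWith {K : ℝ≥0} {r : ℝ} (hr : 0 < r) {f : E → E}
    (hf : LipschitzOnWith K f (closedBall 0 r)) (hfix : ∀ x ∈ sphere 0 r, f x = x) :
    ¬MapsTo f (closedBall 0 r) (sphere 0 r) := by
  intro hmaps
  borelize E
  set g : E → E := fun x => f (radialRetraction r x) - radialRetraction r x with hg
  have hglip : LipschitzWith (K * 2 + 2) g := by
    have hρ : LipschitzWith 2 (radialRetraction r : E → E) := lipschitzWith_radialRetraction hr
    refine (lipschitzOnWith_univ.1 (hf.comp hρ.lipschitzOnWith ?_)).sub hρ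
    exact fun x _ => radialRetraction_mem_closedBall hr x
  have hgball : ∀ x ∉ ball (0 : E) r, g x = 0 := by
    intro x hx
    have hnorm : ‖radialRetraction r x‖ = r := by
      rw [norm_radialRetraction hr, min_eq_left (by simpa using hx)]
    rw [hg, sub_eq_zero]
    exact hfix _ (mem_sphere_zero_iff_norm.2 hnorm)
  have hidg : ∀ x ∈ ball (0 : E) r, x + g x = f x := by
    intro x hx
    simp [hg, radialRetraction_of_norm_le hr (mem_ball_zero_iff.1 hx).le]
  let μ : Measure E := Measure.addHaar
  have hdet : ∀ᵐ x ∂μ, x ∈ ball (0 : E) r → (1 + fderiv ℝ g x).det = 0 := by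
    filter_upwards [hglip.ae_differentiableAt] with x hgx hx
    have hnorm : ∀ y ∈ ball (0 : E) r, ‖y + g y‖ = r := fun y hy => by
      rw [hidg y hy]
      exact mem_sphere_zero_iff_norm.1 (hmaps (ball_subset_closedBall hy))
    have hmax : IsLocalMax (fun y => ‖y + g y‖) x := by
      filter_upwards [isOpen_ball.mem_nhds hx] with y hy
      rw [hnorm y hy, hnorm x hx]
    have hne : x + g x ≠ 0 := norm_ne_zero_iff.1 (hnorm x hx ▸ hr.ne')
    exact det_eq_zero_of_isLocalMax_norm ((hasFDerivAt_id x).add hgx.hasFDerivAt) hmax hne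
  have hvol := setIntegral_det_one_add_fderiv μ hglip measurableSet_ball measure_ball_lt_top.ne
    hgball
  rw [setIntegral_congr_ae measurableSet_ball hdet, integral_zero] at hvol
  exact (ENNReal.toReal_pos (measure_ball_pos μ 0 hr).ne' measure_ball_lt_top.ne).ne hvol

theorem exists_mem_closedBall_eq_zero_of_lipschitzOnWith {K : ℝ≥0} {r : ℝ} (hr : 0 < r)
    {f : E → E} (hf : LipschitzOnWith K f (closedBall 0 r)) (hfix : ∀ x ∈ sphere 0 r, f x = x) :
    ∃ x ∈ closedBall 0 r, f x = 0 := by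
  by_contra! hne
  obtain ⟨x₀, hx₀, hmin⟩ := (isCompact_closedBall (0 : E) r).exists_isMinOn
    (nonempty_closedBall.2 hr.le) hf.continuousOn.norm
  set δ := ‖f x₀‖
  have hδpos : 0 < δ := norm_pos_iff.2 (hne x₀ hx₀)
  have hretract : LipschitzOnWith (‖r / δ‖₊ * (2 * K))
      (fun x => (r / δ) • radialRetraction δ (f x)) (closedBall 0 r) :=
    (lipschitzWith_smul _).comp_lipschitzOnWith
      ((lipschitzWith_radialRetraction hδpos).comp_lipschitzOnWith hf)
  have hmin (x : E) (hx : x ∈ closedBall 0 r) : δ ≤ ‖f x‖ := hmin hx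
  refine not_mapsTo_sphere_of_lipschitzOnWith hr hretract (fun x hx => ?_) fun x hx => ?_
  · have hle := hmin x (sphere_subset_closedBall hx)
    rw [hfix x hx] at hle ⊢
    rw [radialRetraction_of_le_norm hle, mem_sphere_zero_iff_norm.1 hx, smul_smul,
      div_mul_div_cancel₀ hδpos.ne', div_self hr.ne', one_smul]
  · rw [mem_sphere_zero_iff_norm, norm_smul, norm_radialRetraction hδpos, min_eq_left (hmin x hx),
      Real.norm_of_nonneg (by positivity), div_mul_cancel₀ _ hδpos.ne']

theorem lipschitzOnWith_smul_of_norm_le {X : Type*} [PseudoMetricSpace X] {F : Type*}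
    [SeminormedAddCommGroup F] [NormedSpace ℝ F] {φ : X → ℝ} {f : X → F} {s : Set X}
    {Kφ Kf a b : ℝ≥0} (hφ : LipschitzOnWith Kφ φ s) (hf : LipschitzOnWith Kf f s)
    (hφa : ∀ x ∈ s, ‖φ x‖ ≤ a) (hfb : ∀ x ∈ s, ‖f x‖ ≤ b) :
    LipschitzOnWith (Kφ * b + a * Kf) (fun x => φ x • f x) s := by
  refine LipschitzOnWith.of_dist_le_mul fun x hx y hy => ?_
  have hsplit : φ x • f x - φ y • f y = (φ x - φ y) • f x + φ y • (f x - f y) := by module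
  rw [dist_eq_norm, hsplit]
  calc
    _ ≤ ‖φ x - φ y‖ * ‖f x‖ + ‖φ y‖ * ‖f x - f y‖ :=
      (norm_add_le _ _).trans_eq (by rw [norm_smul, norm_smul])
    _ ≤ Kφ * dist x y * b + a * (Kf * dist x y) := by
      rw [← dist_eq_norm, ← dist_eq_norm]
      gcongr
      exacts [hφ.dist_le_mul x hx y hy, hfb x hx, hφa y hy, hf.dist_le_mul x hx y hy]
    _ = ↑(Kφ * b + a * Kf) * dist x y := by push_cast; ring

theorem exists_isFixedPt_of_lipschitzWith_of_isBounded_range {K : ℝ≥0} {T : E → E}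
    (hT : LipschitzWith K T) (hbdd : Bornology.IsBounded (range T)) :
    ∃ x, Function.IsFixedPt T x := by
  obtain ⟨M, hM0, hM⟩ := hbdd.exists_pos_norm_le
  rw [forall_mem_range] at hM
  lift M to ℝ≥0 using hM0.le
  let φ : E → ℝ := fun x => min 1 (M + 1 - ‖x‖)
  have hφlip : LipschitzWith 1 φ :=
    (by simpa using (LipschitzWith.const (M + 1 : ℝ)).sub lipschitzWith_one_norm :
      LipschitzWith 1 fun x : E => (M + 1 : ℝ) - ‖x‖).const_min 1
  have hφ0 : ∀ x ∈ closedBall (0 : E) (M + 1), 0 ≤ φ x := fun x hx =>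
    le_min zero_le_one (sub_nonneg.2 (mem_closedBall_zero_iff.1 hx))
  have hφ1 (x : E) : φ x ≤ 1 := min_le_left _ _
  have hlip : LipschitzOnWith _ (fun x => x - φ x • T x) (closedBall 0 (M + 1)) :=
    LipschitzWith.id.lipschitzOnWith.sub <|
      lipschitzOnWith_smul_of_norm_le (a := 1) hφlip.lipschitzOnWith hT.lipschitzOnWith
        (fun x hx => (Real.norm_of_nonneg (hφ0 x hx)).trans_le (hφ1 x)) fun x _ => hM x
  obtain ⟨x, hx, hzero⟩ := exists_mem_closedBall_eq_zero_of_lipschitzOnWith (by positivity) hlip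
    fun x hx => by simp [φ, mem_sphere_zero_iff_norm.1 hx]
  have hxT : x = φ x • T x := sub_eq_zero.1 hzero
  have hxM : ‖x‖ ≤ M := by
    rw [hxT, norm_smul, Real.norm_of_nonneg (hφ0 x hx)]
    exact (mul_le_of_le_one_left (norm_nonneg _) (hφ1 x)).trans (hM x)
  have hφx : φ x = 1 := min_eq_left (by linarith)
  exact ⟨x, by rw [hφx, one_smul] at hxT; exact hxT.symm⟩

theorem exists_isFixedPt_of_lipschitzOnWith_closedBall {K : ℝ≥0} {c : E} {r : ℝ} (hr : 0 < r)
    {T : E → E} (hT : LipschitzOnWith K T (closedBall c r))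
    (hmaps : MapsTo T (closedBall c r) (closedBall c r)) :
    ∃ x ∈ closedBall c r, Function.IsFixedPt T x := by
  let ρ : E → E := fun x => c + radialRetraction r (x - c)
  have hρlip : LipschitzWith 2 ρ := by
    simpa [Function.comp_def] using (LipschitzWith.const c).add
      ((lipschitzWith_radialRetraction hr).comp (LipschitzWith.id.sub (LipschitzWith.const c)))
  have hρmem (x : E) : ρ x ∈ closedBall c r := by
    simpa [ρ] using radialRetraction_mem_closedBall hr (x - c)
  obtain ⟨x, hx⟩ := exists_isFixedPt_of_lipschitzWith_of_isBounded_range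
    (lipschitzOnWith_univ.1 (hT.comp hρlip.lipschitzOnWith fun x _ => hρmem x))
    (isBounded_closedBall.subset (range_subset_iff.2 fun x => hmaps (hρmem x)))
  have hxball : x ∈ closedBall c r := hx ▸ hmaps (hρmem x)
  have hρx : ρ x = x := by
    simp [ρ, radialRetraction_of_norm_le hr (mem_closedBall_iff_norm.1 hxball)]
  exact ⟨x, hxball, by simpa [Function.IsFixedPt, hρx] using hx⟩

end Brouwer

section Differentiability

variable {E G : Type*} [NormedAddCommGroup E] [NormedSpace ℝ E]
  [NormedAddCommGroup G] [NormedSpace ℝ G]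

theorem nhds_le_map_nhds_of_hasFDerivAt_id [FiniteDimensional ℝ G] {K : ℝ≥0} {f : G → G} {x : G}
    {s : Set G} (hf : LipschitzOnWith K f s) (hs : s ∈ 𝓝 x)
    (hf' : HasFDerivAt f (ContinuousLinearMap.id ℝ G) x) : 𝓝 (f x) ≤ map f (𝓝 x) := by
  refine le_map fun t ht => ?_
  have happrox : ∀ᶠ y in 𝓝 x, ‖f y - f x - (y - x)‖ ≤ 1 / 2 * ‖y - x‖ :=
    hf'.isLittleO.bound one_half_pos
  obtain ⟨r, hr, hball⟩ := nhds_basis_closedBall.eventually_iff.1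
    (happrox.and (inter_mem hs ht))
  refine mem_of_superset (closedBall_mem_nhds (f x) (half_pos hr)) fun w hw => ?_
  have hmaps : MapsTo (fun y => y - f y + w) (closedBall x r) (closedBall x r) := by
    intro y hy
    have hyr : ‖y - x‖ ≤ r := mem_closedBall_iff_norm.1 hy
    have hwr : ‖w - f x‖ ≤ r / 2 := mem_closedBall_iff_norm.1 hw
    rw [mem_closedBall_iff_norm]
    calc
      ‖y - f y + w - x‖ = ‖(w - f x) - (f y - f x - (y - x))‖ := by congr 1; abel
      _ ≤ ‖w - f x‖ + ‖f y - f x - (y - x)‖ := norm_sub_le _ _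
      _ ≤ r := by linarith [(hball hy).1]
  have hlip : LipschitzOnWith (1 + K + 0) (fun y => y - f y + w) (closedBall x r) :=
    (LipschitzWith.id.lipschitzOnWith.sub (hf.mono fun y hy => (hball hy).2.1)).add
      (LipschitzWith.const w).lipschitzOnWith
  obtain ⟨y, hy, hfix⟩ := exists_isFixedPt_of_lipschitzOnWith_closedBall hr hlip hmaps
  have hfy : y + (w - f y) = y := by rw [← add_sub_assoc, add_sub_right_comm]; exact hfix
  exact ⟨y, (hball hy).2.2, (sub_eq_zero.1 (add_eq_left.1 hfy)).symm⟩

theorem hasLineDerivAt_of_tendsto_slope_zero_right {f : E → G} {x v : E} {f' : G}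
    (hpos : Tendsto (fun t : ℝ => t⁻¹ • (f (x + t • v) - f x)) (𝓝[>] 0) (𝓝 f'))
    (hneg : Tendsto (fun t : ℝ => t⁻¹ • (f (x + t • -v) - f x)) (𝓝[>] 0) (𝓝 (-f'))) :
    HasLineDerivAt ℝ f f' x v := by
  rw [hasLineDerivAt_iff_tendsto_slope_zero, ← nhdsLT_sup_nhdsGT, tendsto_sup]
  refine ⟨?_, hpos⟩
  have hflip : Tendsto (Neg.neg : ℝ → ℝ) (𝓝[<] 0) (𝓝[>] 0) := by
    simpa using tendsto_neg_nhdsLT (a := (0 : ℝ))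
  simpa [Function.comp_def, inv_neg] using (hneg.comp hflip).neg

theorem hasFDerivAt_of_lipschitzWith_of_eventually_tendsto_slope_zero_right
    [FiniteDimensional ℝ E] {K : ℝ≥0} {f : E → G} (hf : LipschitzWith K f) {x : E}
    {f' : E →L[ℝ] G}
    (hf' : ∀ᶠ v in 𝓝 0,
      Tendsto (fun t : ℝ => t⁻¹ • (f (x + t • v) - f x)) (𝓝[>] 0) (𝓝 (f' v))) :
    HasFDerivAt f f' x := by
  refine hf.hasFDerivAt_of_hasLineDerivAt_of_closure (s := univ) (by simp) fun v _ => ?_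
  have hneg : ∀ᶠ v in 𝓝 0,
      Tendsto (fun t : ℝ => t⁻¹ • (f (x + t • -v) - f x)) (𝓝[>] 0) (𝓝 (f' (-v))) :=
    (tendsto_neg (0 : E)).eventually (by simpa using hf')
  have hscale : Tendsto (fun c : ℝ => c • v) (𝓝[≠] 0) (𝓝 0) := by
    refine Tendsto.mono_left ?_ nhdsWithin_le_nhds
    simpa using (tendsto_id (α := ℝ) (x := 𝓝 0)).smul_const v
  obtain ⟨c, hc, hc0⟩ := ((hscale.eventually (hf'.and hneg)).and
    self_mem_nhdsWithin).exists
  have hline := (hasLineDerivAt_of_tendsto_slope_zero_right hc.1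
    (by simpa only [map_neg] using hc.2)).smul c⁻¹
  simpa [smul_smul, inv_mul_cancel₀ (show c ≠ 0 from hc0)] using hline

end Differentiability

section Cone

theorem sum_smul_mem_of_convex_of_zero_mem {𝕜 E ι : Type*} [Field 𝕜] [LinearOrder 𝕜]
    [IsStrictOrderedRing 𝕜] [AddCommGroup E] [Module 𝕜 E] {C : Set E} (hC : Convex 𝕜 C)
    (h0 : 0 ∈ C) {s : Finset ι} {w : ι → 𝕜} {x : ι → E} (hw : ∀ i ∈ s, 0 ≤ w i)
    (hsum : ∑ i ∈ s, w i ≤ 1) (hx : ∀ i ∈ s, x i ∈ C) : ∑ i ∈ s, w i • x i ∈ C := by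
  rcases (Finset.sum_nonneg hw).eq_or_lt with hzero | hpos
  · rw [Finset.sum_eq_zero fun i hi => by
      rw [(Finset.sum_eq_zero_iff_of_nonneg hw).1 hzero.symm i hi, zero_smul]]
    exact h0
  · have hmem := hC.smul_mem_of_zero_mem h0 (hC.centerMass_mem hw hpos hx) ⟨hpos.le, hsum⟩
    rwa [Finset.centerMass, smul_inv_smul₀ hpos.ne'] at hmem

theorem lipschitzWith_max_zero_comp {X ι : Type*} [PseudoMetricSpace X] [Fintype ι] {K : ℝ≥0}
    {f : X → ι → ℝ} (hf : LipschitzWith K f) : LipschitzWith K fun x i => max (f x i) 0 := by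
  refine LipschitzWith.of_dist_le_mul fun x y => (dist_pi_le_iff (by positivity)).2 fun i => ?_
  calc
    |max (f x i) 0 - max (f y i) 0| ≤ |f x i - f y i| := abs_max_sub_max_le_abs _ _ _
    _ ≤ dist (f x) (f y) := dist_le_pi_dist (f x) (f y) i
    _ ≤ K * dist x y := hf.dist_le_mul x y

theorem exists_lipschitzWith_nonneg_coordinates (G : Type*) [NormedAddCommGroup G]
    [NormedSpace ℝ G] [FiniteDimensional ℝ G] :
    ∃ (ι : Type) (_ : Fintype ι) (y : ι → G) (K : ℝ≥0) (t : G → ι → ℝ), LipschitzWith K t ∧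
      (∀ u, 0 ≤ t u) ∧ (∀ a : ℝ, 0 ≤ a → ∀ u, t (a • u) = a • t u) ∧
        ∀ u, ∑ i, t u i • y i = u := by
  let b := Module.finBasis ℝ G
  let coord : G →ₗ[ℝ] Fin (Module.finrank ℝ G) ⊕ Fin (Module.finrank ℝ G) → ℝ :=
    LinearMap.pi (Sum.elim b.coord fun i => -b.coord i)
  refine ⟨_, inferInstance, Sum.elim b fun i => -b i, _, fun u i => max (coord u i) 0,
    lipschitzWith_max_zero_comp coord.toContinuousLinearMap.lipschitz,
    fun u i => le_max_right _ _, fun a ha u => ?_, fun u => ?_⟩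
  · ext i
    simp [mul_max_of_nonneg _ _ ha]
  · calc
      _ = ∑ i, max (b.repr u i) 0 • b i - ∑ i, max (-b.repr u i) 0 • b i := by
        simp [coord, Fintype.sum_sum_type, ← sub_eq_add_neg]
      _ = ∑ i, (max (b.repr u i) 0 - max (-b.repr u i) 0) • b i := by
        simp only [sub_smul, Finset.sum_sub_distrib]
      _ = u := by simp_rw [max_zero_sub_max_neg_zero_eq_self, b.sum_repr]

variable {E G : Type*} [NormedAddCommGroup E] [NormedSpace ℝ E] [NormedAddCommGroup G]
  [NormedSpace ℝ G] [FiniteDimensional ℝ G]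

theorem exists_lipschitzWith_homogeneous_rightInverse {C : Set E} (hC : Convex ℝ C) (h0 : 0 ∈ C)
    {L : E →ₗ[ℝ] G} (hL : L '' {y | ∃ c : ℝ, 0 ≤ c ∧ ∃ x ∈ C, y = c • x} = univ) :
    ∃ (K : ℝ≥0) (A : G → E), LipschitzWith K A ∧ (∀ a : ℝ, 0 ≤ a → ∀ u, A (a • u) = a • A u) ∧
      Function.RightInverse A L ∧ ∀ᶠ u in 𝓝 0, A u ∈ C := by
  obtain ⟨ι, _, y, Kt, t, htlip, ht0, hthom, htsum⟩ := exists_lipschitzWith_nonneg_coordinates G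
  have hpre (i : ι) : ∃ c : ℝ, 0 ≤ c ∧ ∃ x ∈ C, L (c • x) = y i := by
    obtain ⟨_, ⟨c, hc, x, hx, rfl⟩, hy⟩ := hL.superset (mem_univ (y i))
    exact ⟨c, hc, x, hx, hy⟩
  choose c hc x hx hcx using hpre
  let S : (ι → ℝ) →L[ℝ] E := (Fintype.linearCombination ℝ fun i => c i • x i).toContinuousLinearMap
  have hS (w : ι → ℝ) : S w = ∑ i, w i • c i • x i := Fintype.linearCombination_apply ..
  refine ⟨_, S ∘ t, S.lipschitz.comp htlip, fun a ha u => ?_, fun u => ?_, ?_⟩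
  · rw [Function.comp_apply, hthom a ha, map_smul, Function.comp_apply]
  · simp only [Function.comp_apply, hS, map_sum, map_smul, ← hcx] at htsum ⊢
    exact htsum u
  · have ht_zero : t 0 = 0 := by simpa using hthom 0 le_rfl 0
    have hsmall : ∀ᶠ u in 𝓝 0, ∑ i, t u i * c i < 1 := by
      have hcont : Continuous fun u => ∑ i, t u i * c i := by
        have := htlip.continuous
        fun_prop
      exact hcont.continuousAt.eventually_lt_const (by simp [ht_zero])
    filter_upwards [hsmall] with u hu
    simp only [Function.comp_apply, hS, smul_smul]
    exact sum_smul_mem_of_convex_of_zero_mem hC h0 (fun i _ => mul_nonneg (ht0 u i) (hc i)) hu.le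
      fun i _ => hx i

theorem stmt_13_general {C : Set E} (hC : Convex ℝ C) (h0 : 0 ∈ C) {F : E → G} {K : ℝ≥0}
    (hF : LipschitzOnWith K F C) {F' : E →ₗ[ℝ] G}
    (hF' : ∀ x ∈ C, Tendsto (fun α : ℝ => α⁻¹ • (F (α • x) - F 0)) (𝓝[>] 0) (𝓝 (F' x)))
    (hsurj : F' '' {y | ∃ c : ℝ, 0 ≤ c ∧ ∃ x ∈ C, y = c • x} = univ) {V : Set E} (hV : V ∈ 𝓝 0) :
    F '' (V ∩ C) ∈ 𝓝 (F 0) := by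
  obtain ⟨F₁, hF₁lip, hFF₁⟩ := hF.extend_finite_dimension
  obtain ⟨KA, A, hAlip, hAhom, hAinv, hAC⟩ :=
    exists_lipschitzWith_homogeneous_rightInverse hC h0 hsurj
  have hA0 : A 0 = 0 := by simpa using hAhom 0 le_rfl 0
  have hderiv : HasFDerivAt (F₁ ∘ A) (ContinuousLinearMap.id ℝ G) 0 := by
    refine hasFDerivAt_of_lipschitzWith_of_eventually_tendsto_slope_zero_right
      (hF₁lip.comp hAlip) ?_
    filter_upwards [hAC] with u hu
    rw [ContinuousLinearMap.id_apply, ← hAinv u]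
    refine (hF' (A u) hu).congr' ?_
    filter_upwards [Ioo_mem_nhdsGT one_pos] with α hα
    have hmem : α • A u ∈ C := hC.smul_mem_of_zero_mem h0 hu ⟨hα.1.le, hα.2.le⟩
    simp [hA0, hAhom α hα.1.le, hAinv u, ← hFF₁ hmem, ← hFF₁ h0]
  have hAV : ∀ᶠ u in 𝓝 0, A u ∈ V := hAlip.continuous.continuousAt.eventually (hA0.symm ▸ hV)
  have himage := nhds_le_map_nhds_of_hasFDerivAt_id (hF₁lip.comp hAlip).lipschitzOnWith univ_mem
    hderiv (image_mem_map (hAV.and hAC))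
  rw [Function.comp_apply, hA0, ← hFF₁ h0] at himage
  refine mem_of_superset himage ?_
  rintro _ ⟨u, hu, rfl⟩
  exact ⟨A u, hu, hFF₁ hu.2⟩

end Cone

theorem stmt_13 (m n : ℕ) (C : Set (Fin m → ℝ)) (hCconv : Convex ℝ C)
    (hCint : (interior C).Nonempty) (h0C : (0 : Fin m → ℝ) ∈ C)
    (F : (Fin m → ℝ) → (Fin n → ℝ)) (LF : ℝ≥0) (hLip : LipschitzOnWith LF F C)
    (hF0 : F 0 = 0) (dF : (Fin m → ℝ) →ₗ[ℝ] (Fin n → ℝ))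
    (hdiff : ∀ x ∈ C, Tendsto (fun α : ℝ => α⁻¹ • F (α • x)) (nhdsWithin 0 (Set.Ioi 0))
      (nhds (dF x)))
    (hsurj : dF '' {y | ∃ c : ℝ, 0 ≤ c ∧ ∃ x ∈ C, y = c • x} = Set.univ) :
    ∀ V ∈ nhds (0 : Fin m → ℝ), (0 : Fin n → ℝ) ∈ interior (F '' (V ∩ C)) := by
  intro V hV
  simpa [mem_interior_iff_mem_nhds, hF0] using
    stmt_13_general hCconv h0C hLip (by simpa [hF0] using hdiff) hsurj hV
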